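/- Let γ > 0, ρ ≤ 0, α ∈ ℝ, β ≥ 0, and let U be a random variable uniformly distributed on [0,1]. If 1 − α − 2γ > 0, then E[ U^{−α} · K_{γ,ρ}(1/U)² · (−log U)^{β} ] is finite. -/

import Mathlib

open MeasureTheory Filter Real

noncomputable section

/-- `K_{γ,ρ}(x) = ∫₁^x u^{γ−1} (∫₁^u s^{ρ−1} ds) du`. -/
def Kfun (γ ρ x : ℝ) : ℝ :=
  ∫ u in (1:ℝ)..x, u ^ (γ - 1) * ∫ s in (1:ℝ)..u, s ^ (ρ - 1)

/-!
Bounding powers by their value at the upper endpoint, `∫₁^u s^{ρ-1} ds ≤ u^{max 0 ρ} log u`, and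
repeating this in the outer integral gives `0 ≤ K(x) ≤ x^σ (log x)² / 2` for `x ≥ 1`, where
`σ = max 0 (γ + max 0 ρ)` (so `σ = γ` when `γ > 0 ≥ ρ`). The random variable is therefore dominated
by a multiple of `U^{-α-2σ} (-log U)^{β+4}`, and `U = e^{-T}` turns its expectation into a Gamma
integral, which converges as soon as `α + 2σ < 1` and `β + 4 > -1`.
-/

open Set ProbabilityTheory

section PrimitiveContinuity

variable {E : Type*} [NormedAddCommGroup E] {f : ℝ → E} {s : Set ℝ} {a x : ℝ}

lemma intervalIntegrable_of_continuousOn_ordConnected [hs : s.OrdConnected]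
    (hf : ContinuousOn f s) (ha : a ∈ s) (hx : x ∈ s) : IntervalIntegrable f volume a x :=
  (hf.mono (hs.uIcc_subset ha hx)).intervalIntegrable

lemma continuousOn_primitive_of_isOpen_ordConnected [NormedSpace ℝ E] [CompleteSpace E]
    [s.OrdConnected] (hs : IsOpen s) (hf : ContinuousOn f s) (ha : a ∈ s) :
    ContinuousOn (fun x ↦ ∫ t in a..x, f t) s := fun x hx ↦
  (intervalIntegral.integral_hasDerivAt_right
    (intervalIntegrable_of_continuousOn_ordConnected hf ha hx)
    (hf.stronglyMeasurableAtFilter hs x hx)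
    (hf.continuousAt (hs.mem_nhds hx))).continuousAt.continuousWithinAt

end PrimitiveContinuity

section LogarithmicIntegrals

lemma integral_inv_mul_log {x : ℝ} (hx : 0 < x) :
    ∫ u in (1 : ℝ)..x, u⁻¹ * log u = log x ^ 2 / 2 := by
  have hne : ∀ u ∈ uIcc 1 x, u ≠ 0 := fun u hu ↦
    (ordConnected_Ioi.uIcc_subset (mem_Ioi.2 one_pos) (mem_Ioi.2 hx) hu).ne'
  have hderiv : ∀ u ∈ uIcc 1 x, HasDerivAt (fun u ↦ log u ^ 2 / 2) (u⁻¹ * log u) u :=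
    fun u hu ↦ (((hasDerivAt_log (hne u hu)).pow 2).div_const 2).congr_deriv (by ring)
  have hcont : ContinuousOn (fun u ↦ u⁻¹ * log u) (uIcc 1 x) :=
    (continuousOn_id.inv₀ hne).mul (continuousOn_id.log hne)
  rw [intervalIntegral.integral_eq_sub_of_hasDerivAt hderiv hcont.intervalIntegrable]
  simp

lemma integrableOn_rpow_mul_neg_log_rpow {a b : ℝ} (ha : -1 < a) (hb : -1 < b) :
    IntegrableOn (fun u ↦ u ^ a * (-log u) ^ b) (Ioo 0 1) := by
  have himage : (fun t ↦ exp (-t)) '' Ioi 0 = Ioo 0 1 := by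
    rw [← Function.comp_def exp, image_comp, image_neg_Ioi, neg_zero, image_exp_Iio, exp_zero]
  have hderiv : ∀ t ∈ Ioi (0 : ℝ),
      HasDerivWithinAt (fun t ↦ exp (-t)) (-exp (-t)) (Ioi 0) t := fun t _ ↦
    ((hasDerivAt_neg t).exp.congr_deriv (mul_neg_one _)).hasDerivWithinAt
  have hanti : AntitoneOn (fun t ↦ exp (-t)) (Ioi 0) := fun _ _ _ _ h ↦
    exp_le_exp.2 (neg_le_neg h)
  rw [← himage, integrableOn_image_iff_integrableOn_deriv_smul_of_antitoneOn
    measurableSet_Ioi hderiv hanti]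
  have hGamma : IntegrableOn (fun t : ℝ ↦ t ^ b * exp (-(a + 1) * t ^ (1 : ℝ))) (Ioi 0) :=
    integrableOn_rpow_mul_exp_neg_mul_rpow hb one_pos (by linarith)
  refine hGamma.congr_fun (fun t _ ↦ ?_) measurableSet_Ioi
  have hexp : exp (-(a + 1) * t) = exp (-t) * exp (-t * a) := by rw [← exp_add]; ring_nf
  simp only [rpow_one, neg_neg, smul_eq_mul, log_exp, ← exp_mul, hexp]
  ring

end LogarithmicIntegrals

section PowerBounds

lemma continuousOn_rpow_const_Ioi (r : ℝ) : ContinuousOn (fun x : ℝ ↦ x ^ r) (Ioi 0) :=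
  continuousOn_id.rpow_const fun _ hx ↦ Or.inl (ne_of_gt hx)

lemma rpow_sub_one_le_rpow_mul_inv {r τ s x : ℝ} (hτ : 0 ≤ τ) (hr : r ≤ τ) (hs : 1 ≤ s)
    (hsx : s ≤ x) : s ^ (r - 1) ≤ x ^ τ * s⁻¹ := by
  have hs₀ : 0 < s := one_pos.trans_le hs
  calc s ^ (r - 1) = s ^ r * s⁻¹ := by rw [rpow_sub_one hs₀.ne', div_eq_mul_inv]
    _ ≤ s ^ τ * s⁻¹ := by gcongr
    _ ≤ x ^ τ * s⁻¹ := by gcongr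

lemma integral_rpow_sub_one_nonneg (ρ : ℝ) {u : ℝ} (hu : 1 ≤ u) :
    0 ≤ ∫ s in (1 : ℝ)..u, s ^ (ρ - 1) :=
  intervalIntegral.integral_nonneg hu fun _ hs ↦ rpow_nonneg (zero_le_one.trans hs.1) _

lemma integral_rpow_sub_one_le (ρ : ℝ) {u : ℝ} (hu : 1 ≤ u) :
    ∫ s in (1 : ℝ)..u, s ^ (ρ - 1) ≤ u ^ max 0 ρ * log u := by
  have hu₀ : 0 < u := one_pos.trans_le hu
  have hne : ∀ s ∈ Ioi (0 : ℝ), s ≠ 0 := fun _ hs ↦ ne_of_gt hs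
  calc ∫ s in (1 : ℝ)..u, s ^ (ρ - 1) ≤ ∫ s in (1 : ℝ)..u, u ^ max 0 ρ * s⁻¹ :=
        intervalIntegral.integral_mono_on hu
          (intervalIntegrable_of_continuousOn_ordConnected
            (continuousOn_rpow_const_Ioi _) (mem_Ioi.2 one_pos) hu₀)
          (intervalIntegrable_of_continuousOn_ordConnected
            (continuousOn_const.mul (continuousOn_id.inv₀ hne)) (mem_Ioi.2 one_pos) hu₀)
          fun s hs ↦ rpow_sub_one_le_rpow_mul_inv (le_max_left _ _) (le_max_right _ _) hs.1 hs.2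
    _ = u ^ max 0 ρ * log u := by
        rw [intervalIntegral.integral_const_mul, integral_inv_of_pos one_pos hu₀, div_one]

end PowerBounds

section Kfun

lemma continuousOn_Kfun_integrand (γ ρ : ℝ) :
    ContinuousOn (fun u : ℝ ↦ u ^ (γ - 1) * ∫ s in (1 : ℝ)..u, s ^ (ρ - 1)) (Ioi 0) :=
  (continuousOn_rpow_const_Ioi _).mul <| continuousOn_primitive_of_isOpen_ordConnected
    isOpen_Ioi (continuousOn_rpow_const_Ioi _) (mem_Ioi.2 one_pos)

lemma continuousOn_Kfun (γ ρ : ℝ) : ContinuousOn (Kfun γ ρ) (Ioi 0) :=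
  continuousOn_primitive_of_isOpen_ordConnected isOpen_Ioi (continuousOn_Kfun_integrand γ ρ)
    (mem_Ioi.2 one_pos)

lemma Kfun_nonneg (γ ρ : ℝ) {x : ℝ} (hx : 1 ≤ x) : 0 ≤ Kfun γ ρ x :=
  intervalIntegral.integral_nonneg hx fun _ hu ↦
    mul_nonneg (rpow_nonneg (zero_le_one.trans hu.1) _) (integral_rpow_sub_one_nonneg ρ hu.1)

lemma Kfun_integrand_le (γ ρ : ℝ) {u x : ℝ} (hu : 1 ≤ u) (hux : u ≤ x) :
    u ^ (γ - 1) * ∫ s in (1 : ℝ)..u, s ^ (ρ - 1) ≤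
      x ^ max 0 (γ + max 0 ρ) * (u⁻¹ * log u) := by
  have hu₀ : 0 < u := one_pos.trans_le hu
  calc u ^ (γ - 1) * ∫ s in (1 : ℝ)..u, s ^ (ρ - 1)
      ≤ u ^ (γ - 1) * (u ^ max 0 ρ * log u) := by gcongr; exact integral_rpow_sub_one_le ρ hu
    _ = u ^ (γ + max 0 ρ - 1) * log u := by rw [← mul_assoc, ← rpow_add hu₀, sub_add_eq_add_sub]
    _ ≤ x ^ max 0 (γ + max 0 ρ) * u⁻¹ * log u := by
        gcongr
        · exact log_nonneg hu
        · exact rpow_sub_one_le_rpow_mul_inv (le_max_left _ _) (le_max_right _ _) hu hux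
    _ = x ^ max 0 (γ + max 0 ρ) * (u⁻¹ * log u) := mul_assoc _ _ _

lemma Kfun_le (γ ρ : ℝ) {x : ℝ} (hx : 1 ≤ x) :
    Kfun γ ρ x ≤ x ^ max 0 (γ + max 0 ρ) * (log x ^ 2 / 2) := by
  have hx₀ : 0 < x := one_pos.trans_le hx
  have hne : ∀ u ∈ Ioi (0 : ℝ), u ≠ 0 := fun _ hu ↦ ne_of_gt hu
  calc Kfun γ ρ x ≤ ∫ u in (1 : ℝ)..x, x ^ max 0 (γ + max 0 ρ) * (u⁻¹ * log u) :=
        intervalIntegral.integral_mono_on hx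
          (intervalIntegrable_of_continuousOn_ordConnected
            (continuousOn_Kfun_integrand γ ρ) (mem_Ioi.2 one_pos) hx₀)
          (intervalIntegrable_of_continuousOn_ordConnected (continuousOn_const.mul
            ((continuousOn_id.inv₀ hne).mul (continuousOn_id.log hne))) (mem_Ioi.2 one_pos) hx₀)
          fun u hu ↦ Kfun_integrand_le γ ρ hu.1 hu.2
    _ = x ^ max 0 (γ + max 0 ρ) * (log x ^ 2 / 2) := by
        rw [intervalIntegral.integral_const_mul, integral_inv_mul_log hx₀]

lemma Kfun_one_div_sq_le (γ ρ : ℝ) {u : ℝ} (hu : u ∈ Ioo 0 1) :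
    Kfun γ ρ (1 / u) ^ 2 ≤
      1 / 4 * (u ^ (-2 * max 0 (γ + max 0 ρ)) * (-log u) ^ (4 : ℝ)) := by
  have hx : 1 ≤ 1 / u := (one_le_div hu.1).2 hu.2.le
  have hpow : ((1 / u) ^ max 0 (γ + max 0 ρ)) ^ 2 = u ^ (-2 * max 0 (γ + max 0 ρ)) := by
    rw [one_div, inv_rpow hu.1.le, ← rpow_neg hu.1.le, ← rpow_mul_natCast hu.1.le]
    ring_nf
  calc Kfun γ ρ (1 / u) ^ 2
      ≤ ((1 / u) ^ max 0 (γ + max 0 ρ) * (log (1 / u) ^ 2 / 2)) ^ 2 :=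
        pow_le_pow_left₀ (Kfun_nonneg γ ρ hx) (Kfun_le γ ρ hx) 2
    _ = 1 / 4 * (u ^ (-2 * max 0 (γ + max 0 ρ)) * (-log u) ^ (4 : ℝ)) := by
        rw [mul_pow, hpow, one_div u, log_inv, rpow_ofNat]
        ring

lemma aestronglyMeasurable_rpow_mul_Kfun_sq_mul_neg_log_rpow (γ ρ a b : ℝ) :
    AEStronglyMeasurable (fun u ↦ u ^ a * Kfun γ ρ (1 / u) ^ 2 * (-log u) ^ b)
      (volume.restrict (Ioo 0 1)) := by
  have hcont : ContinuousOn (fun u ↦ Kfun γ ρ (1 / u)) (Ioo 0 1) :=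
    (continuousOn_Kfun γ ρ).comp
      (continuousOn_const.div continuousOn_id fun _ hu ↦ hu.1.ne') fun _ hu ↦ one_div_pos.2 hu.1
  have hK := hcont.aestronglyMeasurable (μ := volume) measurableSet_Ioo
  exact ((by fun_prop : Measurable fun u : ℝ ↦ u ^ a).aestronglyMeasurable.mul (hK.pow 2)).mul
    (by fun_prop : Measurable fun u : ℝ ↦ (-log u) ^ b).aestronglyMeasurable

lemma integrableOn_rpow_mul_Kfun_sq_mul_neg_log_rpow {γ ρ α β : ℝ} (hβ : -5 < β)
    (hα : α + 2 * max 0 (γ + max 0 ρ) < 1) :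
    IntegrableOn (fun u ↦ u ^ (-α) * Kfun γ ρ (1 / u) ^ 2 * (-log u) ^ β) (Ioo 0 1) := by
  set σ := max 0 (γ + max 0 ρ)
  have hdom : IntegrableOn (fun u ↦ 1 / 4 * (u ^ (-α + -2 * σ) * (-log u) ^ (4 + β))) (Ioo 0 1) :=
    (integrableOn_rpow_mul_neg_log_rpow (by linarith) (by linarith)).const_mul _
  refine hdom.mono' (aestronglyMeasurable_rpow_mul_Kfun_sq_mul_neg_log_rpow γ ρ _ _) <|
    ae_restrict_of_forall_mem measurableSet_Ioo fun u hu ↦ ?_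
  have hlog : 0 < -log u := neg_pos.2 (log_neg hu.1 hu.2)
  have hu₀ : 0 < u := hu.1
  rw [norm_of_nonneg (by positivity)]
  calc u ^ (-α) * Kfun γ ρ (1 / u) ^ 2 * (-log u) ^ β
      ≤ u ^ (-α) * (1 / 4 * (u ^ (-2 * σ) * (-log u) ^ (4 : ℝ))) * (-log u) ^ β := by
        gcongr
        exact Kfun_one_div_sq_le γ ρ hu
    _ = 1 / 4 * (u ^ (-α + -2 * σ) * (-log u) ^ (4 + β)) := by
        rw [rpow_add hu₀, rpow_add hlog]
        ring

end Kfun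

theorem uniform_K_sq_moment_finite_general {γ ρ α β : ℝ} (hβ : -5 < β)
    (hα : α + 2 * max 0 (γ + max 0 ρ) < 1) {Ω : Type*} [MeasurableSpace Ω] {P : Measure Ω}
    {U : Ω → ℝ} (hU : HasLaw U (volume.restrict (Icc 0 1)) P) :
    Integrable (fun ω ↦ U ω ^ (-α) * Kfun γ ρ (1 / U ω) ^ 2 * (-log (U ω)) ^ β) P := by
  have hIoo := integrableOn_rpow_mul_Kfun_sq_mul_neg_log_rpow hβ hα
  rw [← integrableOn_Icc_iff_integrableOn_Ioo, IntegrableOn, ← hU.map_eq] at hIoo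
  exact hIoo.comp_aemeasurable hU.aemeasurable

/-- Lemma 3 (ii): if `1 − α − 2γ > 0` then `E[U^{−α} K_{γ,ρ}(1/U)² (−log U)^β] < ∞`
for `U` uniform on `[0,1]`. -/
theorem uniform_K_sq_moment_finite
    (γ ρ α β : ℝ) (hγ : 0 < γ) (hρ : ρ ≤ 0) (hβ : 0 ≤ β) (hαγ : 0 < 1 - α - 2 * γ)
    {Ω : Type*} [MeasurableSpace Ω] (P : Measure Ω) [IsProbabilityMeasure P]
    (U : Ω → ℝ) (hUmeas : Measurable U)
    (hUlaw : Measure.map U P = volume.restrict (Set.Icc (0:ℝ) 1)) :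
    Integrable (fun ω => U ω ^ (-α) * Kfun γ ρ (1 / U ω) ^ 2 * (-Real.log (U ω)) ^ β) P := by
  have hexponent : max 0 (γ + max 0 ρ) = γ := by rw [max_eq_left hρ, add_zero, max_eq_right hγ.le]
  exact uniform_K_sq_moment_finite_general (by linarith) (by rw [hexponent]; linarith)
    ⟨hUmeas.aemeasurable, hUlaw⟩
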